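/- arXiv:2506.14047 — 3 statements merged into one kernel-verified Lean document; each statement's English description precedes it below -/
import Mathlib

section
/- For the free group FG(X) on X with its standard free generating set, M_{sF}(FG(X),X) = M(FG(X),X); that is, the free inverse monoid FIM(X) is strongly F-inverse and is the universal X-generated strongly F-inverse monoid with maximum group image FG(X). -/
/-!
The proof rests on a normal form valid in every inverse monoid `M` with a map `ι : X → M`.
For `g` in the free group, let `t(g)` be the value in `M` of the reduced word of `g` and
`E(g) = t(g) t(g)⁻¹`.  Since the Cayley graph of the free group is a tree, multiplying a reduced
word by a letter either extends it or deletes its last letter, and in both cases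
`t(g)·a = E(g) E(g·a) t(g·a)` (`nf_mul_letter`).  Hence a word `w` has value `P · t(g)`, where `g`
is its value in the free group and `P` is the product of the commuting idempotents `E(h)` over the
vertices `h` visited by the path labelled `w` (`evalWord_eq`).

Everything follows from this formula.  The edge set `Γ_w` determines the visited vertices, so
words identified by the Margolis–Meakin relation are already equal in every inverse monoid,
in particular in `FIM(X)` (`evalWord_eq_of_mmRel`).  A word labelling a simple path in the tree is
reduced, so two such words with the same endpoint coincide (`eq_of_simple`); hence `ξ` is trivial
over `FG(X)`.  In `FIM(X)` the relation σ is equality of values in the free group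
(`sigma_fim_iff`), and `P · t(g) ≤ t(g)` says that reduced words, i.e. simple paths, give the maxima
of the σ-classes.  Universality comes from the fact that `FIM(X)` maps canonically to every
inverse monoid together with a map from `X` (`fimLift`).
-/

/-! Common framework: words over a doubled alphabet, inverse monoids,
presentations of inverse monoids as quotients of the free monoid on letters,
the minimum group congruence, F-inverse and strongly F-inverse properties,
and the Margolis-Meakin / M_sF machinery. -/

namespace SFI

/-- A letter of the doubled alphabet X̄ = X ∪ X⁻¹: a generator together with a
polarity (`true` = the generator itself, `false` = its formal inverse). -/
abbrev Letter (X : Type*) := X × Bool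

/-- Words over the doubled alphabet X̄, i.e. elements of the free monoid X̄*. -/
abbrev Word (X : Type*) := FreeMonoid (Letter X)

variable {X : Type*}

/-- The formal inverse of a letter. -/
def invL (a : Letter X) : Letter X := (a.1, !a.2)

theorem invL_invL (a : Letter X) : invL (invL a) = a := by
  cases a; simp [invL]

/-- Formal inversion of a word: reverse the word and invert each letter. -/
def wordInv (w : Word X) : Word X :=
  FreeMonoid.ofList (((FreeMonoid.toList w).reverse).map invL)

theorem wordInv_mul (u v : Word X) : wordInv (u * v) = wordInv v * wordInv u := by
  simp only [wordInv, FreeMonoid.toList_mul, List.reverse_append, List.map_append,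
    FreeMonoid.ofList_append]

theorem wordInv_wordInv (w : Word X) : wordInv (wordInv w) = w := by
  simp only [wordInv, FreeMonoid.toList_ofList, List.map_reverse, List.reverse_reverse,
    List.map_map]
  have : (invL ∘ invL : Letter X → Letter X) = id := funext invL_invL
  rw [this, List.map_id, FreeMonoid.ofList_toList]

/-- Evaluation of a letter in a monoid-with-inversion, along a map `ι` of generators. -/
def evalLetter {M : Type*} [Monoid M] [Inv M] (ι : X → M) (a : Letter X) : M :=
  if a.2 then ι a.1 else (ι a.1)⁻¹

/-- Evaluation of a word in a monoid-with-inversion, along a map `ι` of generators: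
`evalWord ι w` is the element `[w]` represented by the word `w`. -/
def evalWord {M : Type*} [Monoid M] [Inv M] (ι : X → M) (w : Word X) : M :=
  ((FreeMonoid.toList w).map (evalLetter ι)).prod

/-- `M` is `X`-generated via `ι : X → M` if every element of `M` is represented by
some word over the doubled alphabet X̄. -/
def XGen {M : Type*} [Monoid M] [Inv M] (ι : X → M) : Prop :=
  Function.Surjective (evalWord ι)

/-- Inverse monoids, as a variety: a monoid with an involutive anti-automorphism `⁻¹`
such that `a a⁻¹ a = a` and idempotents (elements of the form `a a⁻¹`) commute.
This is equivalent to every element having a unique von Neumann inverse. -/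
class InverseMonoid (M : Type*) extends Monoid M, Inv M where
  mul_inv_rev : ∀ a b : M, (a * b)⁻¹ = b⁻¹ * a⁻¹
  inv_inv : ∀ a : M, a⁻¹⁻¹ = a
  mul_inv_mul : ∀ a : M, a * a⁻¹ * a = a
  idem_mul_comm : ∀ a b : M, a * a⁻¹ * (b * b⁻¹) = b * b⁻¹ * (a * a⁻¹)

/-- The natural partial order of an inverse monoid: `a ≤ b` iff `a = a a⁻¹ b`. -/
def natLe {M : Type*} [Monoid M] [Inv M] (a b : M) : Prop := a = a * a⁻¹ * b

/-- A congruence has group quotient iff every element of the quotient is (two-sided)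
invertible. -/
def IsGroupCon {M : Type*} [Monoid M] (c : Con M) : Prop := ∀ x : c.Quotient, IsUnit x

/-- The minimum group congruence σ of a monoid: the infimum of all congruences whose
quotient is a group.  For an inverse monoid this is the least group congruence, and
the quotient is the maximum group image. -/
def sigmaCon (M : Type*) [Monoid M] : Con M := sInf {c : Con M | IsGroupCon c}

/-- An inverse monoid is F-inverse if every σ-class has a maximum element in the
natural partial order. -/
def FInverse (M : Type*) [InverseMonoid M] : Prop :=
  ∀ a : M, ∃ m : M, sigmaCon M m a ∧ ∀ b : M, sigmaCon M b a → natLe b m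

/-- The word obtained from the prefix of length `k` of `w`. -/
def wordPrefix (w : Word X) (k : ℕ) : Word X :=
  FreeMonoid.ofList ((FreeMonoid.toList w).take k)

/-- `w` labels a simple path starting at `1` in the Cayley graph of the maximum group
image `S/σ` of the inverse monoid `S` (w.r.t. the generating map `ι`): the values of
distinct prefixes of `w` lie in distinct σ-classes, i.e. the vertices visited by the
path are pairwise distinct. -/
def IsSimplePathWordS {S : Type*} [InverseMonoid S] (ι : X → S) (w : Word X) : Prop :=
  ∀ j k : ℕ, j ≤ (FreeMonoid.toList w).length → k ≤ (FreeMonoid.toList w).length →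
    sigmaCon S (evalWord ι (wordPrefix w j)) (evalWord ι (wordPrefix w k)) → j = k

/-- An X-generated inverse monoid `S` (via `ι`) is strongly F-inverse: it is F-inverse,
and the canonical morphism from the Margolis-Meakin expansion `M(S/σ, X)` to `S` sends
all maximal elements of each σ-class of `M(S/σ,X)` (namely, the graphs spanned by simple
paths from 1 to a fixed vertex) to the single maximum element of the corresponding
σ-class of `S`.  Concretely: any two words labelling simple paths from 1 to the same
vertex of the Cayley graph of S/σ represent the same element of `S`, and this element
is the top of its σ-class. -/
def StronglyFInverse {S : Type*} [InverseMonoid S] (ι : X → S) : Prop :=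
  XGen ι ∧ FInverse S ∧
    ∀ u v : Word X, IsSimplePathWordS ι u → IsSimplePathWordS ι v →
      sigmaCon S (evalWord ι u) (evalWord ι v) →
      evalWord ι u = evalWord ι v ∧
        ∀ t : Word X, sigmaCon S (evalWord ι t) (evalWord ι u) →
          natLe (evalWord ι t) (evalWord ι u)

/-! ### Presentations of inverse monoids -/

/-- The generating pairs of the Wagner congruence on X̄*: `(w w⁻¹ w, w)` and
`(u u⁻¹ v v⁻¹, v v⁻¹ u u⁻¹)`. -/
def wagnerRel : Word X → Word X → Prop := fun a b =>
  (∃ w : Word X, a = w * wordInv w * w ∧ b = w) ∨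
  (∃ u v : Word X, a = u * wordInv u * (v * wordInv v) ∧ b = v * wordInv v * (u * wordInv u))

/-- The congruence on X̄* generated by the Wagner relations together with the extra
defining relations `r`; the corresponding quotient is the inverse monoid
`Inv⟨X ∣ r⟩`.  (The relation set is closed under formal inversion; this does not
change the congruence, since any monoid congruence on an inverse monoid automatically
respects inversion, but it makes the inversion on the quotient directly definable.) -/
def presCon (r : Word X → Word X → Prop) : Con (Word X) :=
  conGen (fun u v => (wagnerRel u v ∨ r u v) ∨
    (wagnerRel (wordInv u) (wordInv v) ∨ r (wordInv u) (wordInv v)))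

/-- The inverse monoid presented by the defining relations `r` (together with the
Wagner relations), i.e. `Inv⟨X ∣ r⟩`, a quotient of the free inverse monoid FIM(X). -/
def InvPres (r : Word X → Word X → Prop) : Type _ := (presCon r).Quotient

instance (r : Word X → Word X → Prop) : Monoid (InvPres r) :=
  inferInstanceAs (Monoid (presCon r).Quotient)

theorem presCon_inv {r : Word X → Word X → Prop} {u v : Word X} (h : presCon r u v) :
    presCon r (wordInv u) (wordInv v) := by
  show ConGen.Rel _ (wordInv u) (wordInv v)
  have h' : ConGen.Rel (fun u v => (wagnerRel u v ∨ r u v) ∨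
      (wagnerRel (wordInv u) (wordInv v) ∨ r (wordInv u) (wordInv v))) u v := h
  clear h
  induction h' with
  | of a b hab =>
    apply ConGen.Rel.of
    rcases hab with hab | hab
    · exact Or.inr (by rwa [wordInv_wordInv, wordInv_wordInv])
    · exact Or.inl hab
  | refl a => exact ConGen.Rel.refl _
  | symm _ ih => exact ConGen.Rel.symm ih
  | trans _ _ ih₁ ih₂ => exact ConGen.Rel.trans ih₁ ih₂
  | mul _ _ ih₁ ih₂ => rw [wordInv_mul, wordInv_mul]; exact ConGen.Rel.mul ih₂ ih₁

instance (r : Word X → Word X → Prop) : Inv (InvPres r) :=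
  ⟨Quotient.map' wordInv (fun _ _ h => presCon_inv h)⟩

instance (r : Word X → Word X → Prop) : InverseMonoid (InvPres r) where
  mul_inv_rev a b := by
    refine Quotient.inductionOn₂' a b (fun u v => ?_)
    exact congrArg Quotient.mk'' (wordInv_mul u v)
  inv_inv a := by
    refine Quotient.inductionOn' a (fun u => ?_)
    exact congrArg Quotient.mk'' (wordInv_wordInv u)
  mul_inv_mul a := by
    refine Quotient.inductionOn' a (fun u => ?_)
    exact Quotient.sound' (ConGen.Rel.of _ _ (Or.inl (Or.inl (Or.inl ⟨u, rfl, rfl⟩))))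
  idem_mul_comm a b := by
    refine Quotient.inductionOn₂' a b (fun u v => ?_)
    exact Quotient.sound' (ConGen.Rel.of _ _ (Or.inl (Or.inl (Or.inr ⟨u, v, rfl, rfl⟩))))

/-- The element of `Inv⟨X ∣ r⟩` represented by the word `w`. -/
def mkW (r : Word X → Word X → Prop) (w : Word X) : InvPres r := Quotient.mk'' w

/-- The canonical generating map `X → Inv⟨X ∣ r⟩`. -/
def genMap (r : Word X → Word X → Prop) : X → InvPres r :=
  fun x => mkW r (FreeMonoid.of (x, true))

/-- The defining relation of a special inverse monoid `Inv⟨X ∣ w = 1⟩`. -/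
def specialRel (w : Word X) : Word X → Word X → Prop := fun a b => a = w ∧ b = 1

/-- The defining relations of a special inverse monoid `Inv⟨X ∣ wᵢ = 1 (i ∈ I)⟩`. -/
def familyRel {I : Type*} (w : I → Word X) : Word X → Word X → Prop :=
  fun a b => ∃ i, a = w i ∧ b = 1

/-- The defining relations of an inverse monoid `Inv⟨X ∣ uᵢ = vᵢ (i ∈ I)⟩`. -/
def pairsRel {I : Type*} (p : I → Word X × Word X) : Word X → Word X → Prop :=
  fun a b => ∃ i, a = (p i).1 ∧ b = (p i).2

/-! ### Cayley graphs -/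

section Graph

variable {G : Type*} [Monoid G] [Inv G]

/-- The set of (inverse-closed pairs of) edges of the Cayley graph traversed by the
path starting at `g` and labelled by the list of letters `l`; an edge from `h`
labelled by the letter `a` is recorded as the pair `(h, a)`, together with its
inverse edge `(h·[a], a⁻¹)`. -/
def pathEdges (ιG : X → G) : G → List (Letter X) → Set (G × Letter X)
  | _, [] => ∅
  | g, a :: l =>
      insert (g, a) (insert (g * evalLetter ιG a, invL a)
        (pathEdges ιG (g * evalLetter ιG a) l))

/-- `Γ_w`: the subgraph (set of edges) of the Cayley graph of `G` spanned by the path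
starting at `1` labelled by the word `w`. -/
def Gamma (ιG : X → G) (w : Word X) : Set (G × Letter X) :=
  pathEdges ιG 1 (FreeMonoid.toList w)

/-- `w` labels a simple path starting at `1` in the Cayley graph of `G`: the values of
distinct prefixes of `w` are distinct vertices. -/
def IsSimplePathWordG (ιG : X → G) (w : Word X) : Prop :=
  ∀ j k : ℕ, j ≤ (FreeMonoid.toList w).length → k ≤ (FreeMonoid.toList w).length →
    evalWord ιG (wordPrefix w j) = evalWord ιG (wordPrefix w k) → j = k

/-- `w` labels a simple cycle (based at `1`) in the Cayley graph of `G`: `w` is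
non-empty, `w = 1` holds in `G`, and the initial vertices of the edges of the cycle
(i.e. the values of the proper prefixes of `w`) are pairwise distinct. -/
def IsSimpleCycleWordG (ιG : X → G) (w : Word X) : Prop :=
  w ≠ 1 ∧ evalWord ιG w = 1 ∧
    ∀ j k : ℕ, j < (FreeMonoid.toList w).length → k < (FreeMonoid.toList w).length →
      evalWord ιG (wordPrefix w j) = evalWord ιG (wordPrefix w k) → j = k

/-- The defining relation of the Margolis-Meakin expansion `M(G,X)` as a quotient of
X̄*: two words are identified iff they span the same subgraph of the Cayley graph and
represent the same element of `G`. -/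
def mmRel (ιG : X → G) : Word X → Word X → Prop := fun u v =>
  Gamma ιG u = Gamma ιG v ∧ evalWord ιG u = evalWord ιG v

/-- The generating pairs of the congruence ξ_G: two words labelling simple paths from
`1` to the same element of `G` are identified. -/
def spRel (ιG : X → G) : Word X → Word X → Prop := fun u v =>
  IsSimplePathWordG ιG u ∧ IsSimplePathWordG ιG v ∧ evalWord ιG u = evalWord ιG v

/-- The defining relations of `M_sF(G,X) = M(G,X)/ξ_G` as a quotient of X̄*. -/
def msfRel (ιG : X → G) : Word X → Word X → Prop := fun u v =>
  mmRel ιG u v ∨ spRel ιG u v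

/-- `M_sF(G,X)`: the quotient of the Margolis-Meakin expansion `M(G,X)` by the
congruence ξ_G identifying, for each `g ∈ G`, all graphs spanned by simple paths
from `1` to `g`. -/
abbrev MsF (ιG : X → G) := InvPres (msfRel ιG)

end Graph

/-! ### Reduced words, cyclic words, linked words, invertible pieces -/

/-- A word over X̄ is reduced if it has no factor of the form `x x⁻¹` or `x⁻¹ x`. -/
def ReducedWord (w : Word X) : Prop :=
  ∀ a : Letter X, ¬ ([a, invL a] <:+: FreeMonoid.toList w)

/-- A word over X̄ is cyclically reduced if it is reduced and its first and last
letters are not mutually inverse. -/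
def CyclicallyReducedWord (w : Word X) : Prop :=
  ReducedWord w ∧ ∀ a : Letter X, (FreeMonoid.toList w).head? = some a →
    (FreeMonoid.toList w).getLast? ≠ some (invL a)

/-- A cyclically reduced word is cyclic with respect to `(G,X)` if it labels a simple
cycle in the Cayley graph of `G`. -/
def IsCyclicWord {G : Type*} [Monoid G] [Inv G] (ιG : X → G) (w : Word X) : Prop :=
  CyclicallyReducedWord w ∧ IsSimpleCycleWordG ιG w

/-- `w'` is a cyclic conjugate of `w`. -/
def IsCyclicConjugate (w' w : Word X) : Prop := ∃ u v : Word X, w' = u * v ∧ v * u = w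

/-- A word is linked with respect to `(M, ι)` if for every pair of adjacent letters
`a, b` of the word, `a⁻¹ a = b b⁻¹` holds in `M` (the letters are "matching"). -/
def Linked {M : Type*} [Monoid M] [Inv M] (ι : X → M) (w : Word X) : Prop :=
  ∀ (p q : Word X) (a b : Letter X),
    w = p * (FreeMonoid.of a * (FreeMonoid.of b * q)) →
    (evalLetter ι a)⁻¹ * evalLetter ι a = evalLetter ι b * (evalLetter ι b)⁻¹

/-- `ws` is the factorisation of the word `w` into minimal invertible pieces with
respect to `(M, ι)`: `w` is the concatenation of the members of `ws`, each of which is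
a non-empty word representing an invertible element of `M` such that no proper
non-empty prefix or suffix represents an invertible element of `M`. -/
def IsPieceDecomp {M : Type*} [Monoid M] [Inv M] (ι : X → M) (w : Word X)
    (ws : List (Word X)) : Prop :=
  ws.prod = w ∧ ∀ z ∈ ws, z ≠ 1 ∧ IsUnit (evalWord ι z) ∧
    ∀ p s : Word X, z = p * s → p ≠ 1 → s ≠ 1 →
      ¬ IsUnit (evalWord ι p) ∧ ¬ IsUnit (evalWord ι s)


/-! ### Idempotents of inverse monoids -/

section Proj

variable {M : Type*} [InverseMonoid M]

theorem inv_one' : (1 : M)⁻¹ = 1 := by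
  simpa using InverseMonoid.mul_inv_mul (1 : M)

/-- The idempotents of an inverse monoid, in the form `p = p p⁻¹`. -/
def IsProj (p : M) : Prop := p * p⁻¹ = p

theorem IsProj.inv_eq {p : M} (h : IsProj p) : p⁻¹ = p := by
  have h1 : (p * p⁻¹)⁻¹ = p * p⁻¹ := by
    rw [InverseMonoid.mul_inv_rev, InverseMonoid.inv_inv]
  rwa [show p * p⁻¹ = p from h] at h1

theorem IsProj.mul_self {p : M} (h : IsProj p) : p * p = p := by
  have h1 : p * p⁻¹ = p := h
  rwa [h.inv_eq] at h1

theorem IsProj.comm {p q : M} (hp : IsProj p) (hq : IsProj q) : p * q = q * p := by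
  have h := InverseMonoid.idem_mul_comm p q
  rwa [show p * p⁻¹ = p from hp, show q * q⁻¹ = q from hq] at h

theorem IsProj.mul {p q : M} (hp : IsProj p) (hq : IsProj q) : IsProj (p * q) := by
  show p * q * (p * q)⁻¹ = p * q
  rw [InverseMonoid.mul_inv_rev, hp.inv_eq, hq.inv_eq, mul_assoc, ← mul_assoc q q, hq.mul_self,
    hq.comm hp, ← mul_assoc, hp.mul_self]

theorem isProj_one : IsProj (1 : M) := by
  show (1 : M) * 1⁻¹ = 1
  rw [inv_one', mul_one]

theorem isProj_mul_inv (a : M) : IsProj (a * a⁻¹) := by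
  show a * a⁻¹ * (a * a⁻¹)⁻¹ = a * a⁻¹
  rw [InverseMonoid.mul_inv_rev, InverseMonoid.inv_inv, ← mul_assoc, InverseMonoid.mul_inv_mul]

theorem isProj_inv_mul (a : M) : IsProj (a⁻¹ * a) := by
  simpa only [InverseMonoid.inv_inv] using isProj_mul_inv a⁻¹

variable {G : Type*} {E : G → M}

theorem isProj_prod (hE : ∀ g, IsProj (E g)) (L : List G) : IsProj (L.map E).prod := by
  induction L with
  | nil => exact isProj_one
  | cons g L ih => rw [List.map_cons, List.prod_cons]; exact (hE g).mul ih

theorem absorb_prod (hE : ∀ g, IsProj (E g)) {g : G} {L : List G} (hg : g ∈ L) :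
    E g * (L.map E).prod = (L.map E).prod := by
  induction L with
  | nil => simp at hg
  | cons k L ih =>
    rw [List.map_cons, List.prod_cons]
    rcases List.mem_cons.1 hg with rfl | hg
    · rw [← mul_assoc, (hE g).mul_self]
    · rw [← mul_assoc, (hE g).comm (hE k), mul_assoc, ih hg]

theorem absorb_prod_prod (hE : ∀ g, IsProj (E g)) {L K : List G} (h : ∀ g ∈ L, g ∈ K) :
    (L.map E).prod * (K.map E).prod = (K.map E).prod := by
  induction L with
  | nil => simp
  | cons k L ih =>
    rw [List.map_cons, List.prod_cons, mul_assoc,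
      ih fun g hg => h g (List.mem_cons_of_mem _ hg), absorb_prod hE (h k List.mem_cons_self)]

/-- A product of idempotents depends only on the set of its factors. -/
theorem prod_eq_of_mem_iff (hE : ∀ g, IsProj (E g)) {L K : List G} (h : ∀ g, g ∈ L ↔ g ∈ K) :
    (L.map E).prod = (K.map E).prod := by
  rw [← absorb_prod_prod hE fun g hg => (h g).2 hg, (isProj_prod hE K).comm (isProj_prod hE L),
    absorb_prod_prod hE fun g hg => (h g).1 hg]

end Proj

/-! ### Evaluation of words -/

section Eval

variable {M : Type*} [InverseMonoid M] (ι : X → M)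

theorem evalLetter_invL (a : Letter X) : evalLetter ι (invL a) = (evalLetter ι a)⁻¹ := by
  obtain ⟨x, b⟩ := a
  cases b <;> simp [evalLetter, invL, InverseMonoid.inv_inv]

theorem evalWord_one {N : Type*} [Monoid N] [Inv N] (κ : X → N) : evalWord κ 1 = 1 := rfl

theorem evalWord_mul {N : Type*} [Monoid N] [Inv N] (κ : X → N) (u v : Word X) :
    evalWord κ (u * v) = evalWord κ u * evalWord κ v := by
  simp [evalWord, FreeMonoid.toList_mul]

theorem evalWord_ofList_cons {N : Type*} [Monoid N] [Inv N] (κ : X → N) (a : Letter X)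
    (l : List (Letter X)) :
    evalWord κ (FreeMonoid.ofList (a :: l)) = evalLetter κ a * evalWord κ (FreeMonoid.ofList l) := by
  simp [evalWord]

theorem evalWord_wordInv (w : Word X) : evalWord ι (wordInv w) = (evalWord ι w)⁻¹ := by
  show evalWord ι (wordInv (FreeMonoid.ofList (FreeMonoid.toList w))) =
    (evalWord ι (FreeMonoid.ofList (FreeMonoid.toList w)))⁻¹
  induction FreeMonoid.toList w with
  | nil => exact inv_one'.symm
  | cons a l ih =>
    have h : wordInv (FreeMonoid.ofList (a :: l)) =
        wordInv (FreeMonoid.ofList l) * FreeMonoid.ofList [invL a] := by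
      simp [wordInv, FreeMonoid.ofList_append]
    rw [h, evalWord_mul, ih, evalWord_ofList_cons ι a, InverseMonoid.mul_inv_rev]
    simp [evalWord, evalLetter_invL]

theorem evalLetter_of (a : Letter X) :
    evalLetter (FreeGroup.of : X → FreeGroup X) a = FreeGroup.mk [a] := by
  obtain ⟨x, b⟩ := a
  cases b <;> simp [evalLetter, FreeGroup.of, FreeGroup.invRev]

theorem evalWord_of (l : List (Letter X)) :
    evalWord (FreeGroup.of : X → FreeGroup X) (FreeMonoid.ofList l) = FreeGroup.mk l := by
  induction l with
  | nil => rfl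
  | cons a l ih => rw [evalWord_ofList_cons, ih, evalLetter_of, FreeGroup.mul_mk]; rfl

end Eval

/-! ### Reduced words and simple paths in the free group -/

section FreeGroupWords

open Classical in
/-- Right multiplication by a letter either extends the reduced word or deletes its last letter. -/
theorem toWord_mul_letter (g : FreeGroup X) (a : Letter X) :
    (g * FreeGroup.mk [a]).toWord = g.toWord ++ [a] ∨
      g.toWord = (g * FreeGroup.mk [a]).toWord ++ [invL a] := by
  have hred : FreeGroup.IsReduced g.toWord := FreeGroup.isReduced_toWord
  by_cases h : ∃ L, g.toWord = L ++ [invL a]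
  · right
    obtain ⟨L, hL⟩ := h
    have hLred : FreeGroup.IsReduced L := by
      rw [hL] at hred
      exact hred.infix (List.prefix_append L [invL a]).isInfix
    have hg : g * FreeGroup.mk [a] = FreeGroup.mk L := by
      rw [← FreeGroup.mk_toWord (x := g), hL, FreeGroup.mul_mk]
      have hs : FreeGroup.Red.Step (L ++ (a.1, !a.2) :: (a.1, a.2) :: []) (L ++ []) :=
        FreeGroup.Red.Step.not_rev
      have he : FreeGroup.mk (L ++ (a.1, !a.2) :: (a.1, a.2) :: []) = FreeGroup.mk (L ++ []) :=
        Quot.sound hs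
      simpa [invL] using he
    rw [hg, FreeGroup.toWord_mk, hLred.reduce_eq, hL]
  · left
    have hr : FreeGroup.IsReduced (g.toWord ++ [a]) := by
      refine List.IsChain.append hred (List.isChain_singleton a) ?_
      rintro x hx y hy hxy
      obtain rfl : a = y := by simpa using hy
      by_contra hne
      apply h
      obtain ⟨L, hL⟩ := List.getLast?_eq_some_iff.1 hx
      refine ⟨L, hL.trans ?_⟩
      have : x = invL a := by
        obtain ⟨x, b⟩ := x
        obtain ⟨y, c⟩ := a
        simp only [invL, Prod.mk.injEq] at hxy hne ⊢
        exact ⟨hxy, by revert hne; cases b <;> cases c <;> simp⟩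
      rw [this]
    conv_lhs => rw [← FreeGroup.mk_toWord (x := g)]
    rw [FreeGroup.mul_mk, FreeGroup.toWord_mk, hr.reduce_eq]

/-- A simple path in the Cayley graph of the free group has no backtracking. -/
theorem isReduced_of_simple {w : Word X}
    (h : IsSimplePathWordG (FreeGroup.of : X → FreeGroup X) w) :
    FreeGroup.IsReduced (FreeMonoid.toList w) := by
  rw [FreeGroup.isReduced_iff_not_step]
  intro L' hs
  unfold IsSimplePathWordG wordPrefix at h
  generalize FreeMonoid.toList w = l at h hs
  cases hs with
  | @not L₁ L₂ x b =>
    have h2 := h L₁.length (L₁.length + 2) (by simp) (by simp) (by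
      rw [evalWord_of, evalWord_of]
      have e1 : (L₁ ++ (x, b) :: (x, !b) :: L₂).take L₁.length = L₁ := by simp
      have e2 : (L₁ ++ (x, b) :: (x, !b) :: L₂).take (L₁.length + 2) =
          L₁ ++ (x, b) :: (x, !b) :: [] := by simp [List.take_append]
      rw [e1, e2]
      have hs : FreeGroup.Red.Step (L₁ ++ (x, b) :: (x, !b) :: []) (L₁ ++ []) :=
        FreeGroup.Red.Step.not
      have he : FreeGroup.mk (L₁ ++ (x, b) :: (x, !b) :: []) = FreeGroup.mk (L₁ ++ []) :=
        Quot.sound hs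
      simpa using he.symm)
    omega

open Classical in
theorem toList_eq_toWord_of_simple {w : Word X}
    (h : IsSimplePathWordG (FreeGroup.of : X → FreeGroup X) w) :
    FreeMonoid.toList w = (evalWord (FreeGroup.of : X → FreeGroup X) w).toWord := by
  have := evalWord_of (FreeMonoid.toList w)
  rw [FreeMonoid.ofList_toList] at this
  rw [this, FreeGroup.toWord_mk, (isReduced_of_simple h).reduce_eq]

theorem eq_of_simple {u v : Word X}
    (hu : IsSimplePathWordG (FreeGroup.of : X → FreeGroup X) u)
    (hv : IsSimplePathWordG (FreeGroup.of : X → FreeGroup X) v)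
    (h : evalWord (FreeGroup.of : X → FreeGroup X) u = evalWord FreeGroup.of v) : u = v := by
  apply FreeMonoid.toList.injective
  rw [toList_eq_toWord_of_simple hu, toList_eq_toWord_of_simple hv, h]

/-- The vertices visited by the path in the Cayley graph of the free group that starts at the given
vertex and is labelled by the given list, in order of visit. -/
def verts : FreeGroup X → List (Letter X) → List (FreeGroup X)
  | g, [] => [g]
  | g, a :: l => g :: verts (g * evalLetter FreeGroup.of a) l

theorem start_mem_verts (g : FreeGroup X) (l : List (Letter X)) : g ∈ verts g l := by
  cases l <;> simp [verts]

/-- The edge set of a path determines its vertex set. -/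
theorem mem_verts_iff (h g : FreeGroup X) (l : List (Letter X)) :
    h ∈ verts g l ↔ h = g ∨ ∃ a, (h, a) ∈ pathEdges FreeGroup.of g l := by
  induction l generalizing g with
  | nil => simp [verts, pathEdges]
  | cons a l ih =>
    simp only [verts, pathEdges, List.mem_cons, ih, Set.mem_insert_iff, Prod.mk.injEq]
    constructor
    · rintro (rfl | rfl | ⟨b, hb⟩)
      · exact Or.inl rfl
      · exact Or.inr ⟨invL a, Or.inr (Or.inl ⟨rfl, rfl⟩)⟩
      · exact Or.inr ⟨b, Or.inr (Or.inr hb)⟩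
    · rintro (rfl | ⟨b, ⟨rfl, -⟩ | ⟨rfl, -⟩ | hb⟩)
      · exact Or.inl rfl
      · exact Or.inl rfl
      · exact Or.inr (Or.inl rfl)
      · exact Or.inr (Or.inr ⟨b, hb⟩)

end FreeGroupWords

/-! ### The normal form in an inverse monoid -/

section NormalForm

variable {M : Type*} [InverseMonoid M] (ι : X → M)

open Classical in
/-- `t(g)`: the value in `M` of the reduced word of the free group element `g`. -/
noncomputable def nf (g : FreeGroup X) : M := evalWord ι (FreeMonoid.ofList g.toWord)

/-- `E(g) = t(g) t(g)⁻¹`, the idempotent attached to the geodesic from `1` to `g`. -/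
noncomputable def idem (g : FreeGroup X) : M := nf ι g * (nf ι g)⁻¹

theorem isProj_idem (g : FreeGroup X) : IsProj (idem ι g) := isProj_mul_inv _

theorem idem_mul_nf (g : FreeGroup X) : idem ι g * nf ι g = nf ι g :=
  InverseMonoid.mul_inv_mul _

theorem nf_one : nf ι 1 = 1 := by
  simp [nf, evalWord]

/-- Crossing one edge of the tree. When the letter extends the reduced word, both idempotents are
absorbed trivially; when it deletes the last letter, `t(g) = t(ga) a⁻¹` and `a⁻¹ a` commutes with
the idempotent `t(ga)⁻¹ t(ga)`. -/
theorem nf_mul_letter (g : FreeGroup X) (a : Letter X) :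
    nf ι g * evalLetter ι a =
      idem ι g * (idem ι (g * evalLetter FreeGroup.of a) *
        nf ι (g * evalLetter FreeGroup.of a)) := by
  classical
  rw [idem_mul_nf, evalLetter_of]
  rcases toWord_mul_letter g a with h | h
  · have h1 : nf ι (g * FreeGroup.mk [a]) = nf ι g * evalLetter ι a := by
      unfold nf
      convert evalWord_mul ι (FreeMonoid.ofList g.toWord) (FreeMonoid.ofList [a]) using 2
      · rw [← FreeMonoid.ofList_append, ← h]
      · simp [evalWord]
    rw [h1, ← mul_assoc, idem_mul_nf]
  · have h1 : nf ι g = nf ι (g * FreeGroup.mk [a]) * (evalLetter ι a)⁻¹ := by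
      unfold nf
      rw [← evalLetter_invL]
      convert evalWord_mul ι (FreeMonoid.ofList (g * FreeGroup.mk [a]).toWord)
        (FreeMonoid.ofList [invL a]) using 2
      · rw [← FreeMonoid.ofList_append, ← h]
      · simp [evalWord]
    unfold idem
    rw [h1]
    generalize nf ι (g * FreeGroup.mk [a]) = t
    generalize evalLetter ι a = b
    rw [InverseMonoid.mul_inv_rev, InverseMonoid.inv_inv]
    have hc := (isProj_inv_mul b).comm (isProj_inv_mul t)
    calc t * b⁻¹ * b = t * t⁻¹ * t * (b⁻¹ * b) := by
          rw [InverseMonoid.mul_inv_mul, mul_assoc]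
      _ = t * (t⁻¹ * t * (b⁻¹ * b)) := by simp only [mul_assoc]
      _ = t * b⁻¹ * (b * t⁻¹) * t := by rw [← hc]; simp only [mul_assoc]

theorem nf_mul_evalWord (g : FreeGroup X) (l : List (Letter X)) :
    nf ι g * evalWord ι (FreeMonoid.ofList l) =
      ((verts g l).map (idem ι)).prod *
        nf ι (g * evalWord FreeGroup.of (FreeMonoid.ofList l)) := by
  induction l generalizing g with
  | nil => simp [verts, evalWord_one, idem_mul_nf]
  | cons a l ih =>
    rw [evalWord_ofList_cons, evalWord_ofList_cons, ← mul_assoc, nf_mul_letter, mul_assoc,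
      mul_assoc, ih, ← mul_assoc (idem ι (g * _)), absorb_prod (isProj_idem ι) (start_mem_verts _ l)]
    simp only [verts, List.map_cons, List.prod_cons, mul_assoc]

/-- The normal form: `[w] = P · t(g)`, with `P` the product of the idempotents `E(h)` over the
vertices `h` visited by `w`. -/
theorem evalWord_eq (w : Word X) :
    evalWord ι w = ((verts 1 (FreeMonoid.toList w)).map (idem ι)).prod *
        nf ι (evalWord FreeGroup.of w) := by
  have h := nf_mul_evalWord ι 1 (FreeMonoid.toList w)
  rwa [nf_one, one_mul, one_mul, FreeMonoid.ofList_toList] at h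

/-- Munn's theorem: words spanning the same subtree with the same endpoint are equal in every
inverse monoid. -/
theorem evalWord_eq_of_mmRel {u v : Word X}
    (h : mmRel (FreeGroup.of : X → FreeGroup X) u v) : evalWord ι u = evalWord ι v := by
  obtain ⟨hΓ, hval⟩ := h
  rw [evalWord_eq ι u, evalWord_eq ι v, hval,
    prod_eq_of_mem_iff (isProj_idem ι) (K := verts 1 (FreeMonoid.toList v))]
  intro g
  unfold Gamma at hΓ
  rw [mem_verts_iff, mem_verts_iff, hΓ]

/-- Every value lies below the value of the corresponding reduced word. -/
theorem natLe_nf (w : Word X) : natLe (evalWord ι w) (nf ι (evalWord FreeGroup.of w)) := by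
  rw [natLe, evalWord_eq ι w]
  have hP := isProj_prod (isProj_idem ι) (verts 1 (FreeMonoid.toList w))
  have hE := isProj_idem ι (evalWord FreeGroup.of w)
  have ht := idem_mul_nf ι (evalWord FreeGroup.of w)
  generalize ((verts 1 (FreeMonoid.toList w)).map (idem ι)).prod = P at hP ⊢
  generalize evalWord FreeGroup.of w = g at hE ht ⊢
  rw [InverseMonoid.mul_inv_rev, hP.inv_eq]
  calc P * nf ι g = P * (P * (idem ι g * nf ι g)) := by rw [ht, ← mul_assoc, hP.mul_self]
    _ = P * (P * idem ι g) * nf ι g := by simp only [mul_assoc]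
    _ = P * (idem ι g * P) * nf ι g := by rw [hP.comm hE]
    _ = P * nf ι g * ((nf ι g)⁻¹ * P) * nf ι g := by simp only [idem, mul_assoc]

theorem evalWord_eq_nf_of_simple {w : Word X}
    (h : IsSimplePathWordG (FreeGroup.of : X → FreeGroup X) w) :
    evalWord ι w = nf ι (evalWord FreeGroup.of w) := by
  rw [nf, ← toList_eq_toWord_of_simple h, FreeMonoid.ofList_toList]

end NormalForm

/-! ### The free inverse monoid and its minimum group congruence -/

section FIM

/-- `FIM(X)`, the quotient of the free monoid on `X ∪ X⁻¹` by the Wagner congruence. -/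
abbrev FIM (X : Type*) := InvPres (fun _ _ : Word X => False)

/-- The canonical generating map `X → FIM(X)`. -/
abbrev fimGen : X → FIM X := genMap (fun _ _ : Word X => False)

theorem evalWord_genMap (r : Word X → Word X → Prop) (w : Word X) :
    evalWord (genMap r) w = mkW r w := by
  show evalWord (genMap r) (FreeMonoid.ofList (FreeMonoid.toList w)) =
    mkW r (FreeMonoid.ofList (FreeMonoid.toList w))
  induction FreeMonoid.toList w with
  | nil => rfl
  | cons a l ih =>
    rw [evalWord_ofList_cons, ih]
    obtain ⟨x, b⟩ := a
    cases b <;> rfl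

theorem mkW_eq_iff {r : Word X → Word X → Prop} {u v : Word X} :
    mkW r u = mkW r v ↔ presCon r u v := Quotient.eq''

theorem wagner_evalWord {M : Type*} [InverseMonoid M] (ι : X → M) {u v : Word X}
    (h : wagnerRel u v) : evalWord ι u = evalWord ι v := by
  rcases h with ⟨w, rfl, rfl⟩ | ⟨a, b, rfl, rfl⟩
  · simp only [evalWord_mul, evalWord_wordInv, InverseMonoid.mul_inv_mul]
  · simp only [evalWord_mul, evalWord_wordInv, InverseMonoid.idem_mul_comm]

theorem evalWord_eq_of_presCon {M : Type*} [InverseMonoid M] (ι : X → M) {u v : Word X}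
    (h : presCon (fun _ _ : Word X => False) u v) : evalWord ι u = evalWord ι v := by
  have h' : ConGen.Rel (fun u v : Word X => (wagnerRel u v ∨ False) ∨
      (wagnerRel (wordInv u) (wordInv v) ∨ False)) u v := h
  clear h
  induction h' with
  | of a b hab =>
    rcases hab with (hab | hab) | (hab | hab)
    · exact wagner_evalWord ι hab
    · exact hab.elim
    · have := congrArg (·⁻¹) (wagner_evalWord ι hab)
      simpa only [evalWord_wordInv, InverseMonoid.inv_inv] using this
    · exact hab.elim
  | refl a => rfl
  | symm _ ih => exact ih.symm
  | trans _ _ ih₁ ih₂ => exact ih₁.trans ih₂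
  | mul _ _ ih₁ ih₂ => rw [evalWord_mul, evalWord_mul, ih₁, ih₂]

/-- The canonical morphism from `FIM(X)` to an inverse monoid `M` extending `ι : X → M`. -/
def fimLift {M : Type*} [InverseMonoid M] (ι : X → M) : FIM X →* M where
  toFun := Quotient.lift (evalWord ι) fun _ _ h => evalWord_eq_of_presCon ι h
  map_one' := rfl
  map_mul' a b := by
    refine Quotient.inductionOn₂' a b fun u v => ?_
    exact evalWord_mul ι u v

theorem fimLift_mkW {M : Type*} [InverseMonoid M] (ι : X → M) (w : Word X) :
    fimLift ι (mkW _ w) = evalWord ι w := rfl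

theorem fimLift_inv {M : Type*} [InverseMonoid M] (ι : X → M) (m : FIM X) :
    fimLift ι m⁻¹ = (fimLift ι m)⁻¹ := by
  refine Quotient.inductionOn' m fun w => ?_
  exact evalWord_wordInv ι w

/-- A group, viewed as an inverse monoid. -/
abbrev groupInverseMonoid (G : Type*) [Group G] : InverseMonoid G where
  mul_inv_rev := _root_.mul_inv_rev
  inv_inv := _root_.inv_inv
  mul_inv_mul a := by simp
  idem_mul_comm a b := by simp

/-- The canonical morphism from `FIM(X)` to the free group. -/
def fimToFree (X : Type*) : FIM X →* FreeGroup X :=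
  letI := groupInverseMonoid (FreeGroup X)
  fimLift (FreeGroup.of : X → FreeGroup X)

theorem fimToFree_mkW (w : Word X) : fimToFree X (mkW _ w) = evalWord FreeGroup.of w := rfl

theorem fimToFree_inv (m : FIM X) : fimToFree X m⁻¹ = (fimToFree X m)⁻¹ :=
  letI := groupInverseMonoid (FreeGroup X)
  fimLift_inv (FreeGroup.of : X → FreeGroup X) m

theorem sigmaCon_iff {M : Type*} [Monoid M] {a b : M} :
    sigmaCon M a b ↔ ∀ c : Con M, IsGroupCon c → c a b := Iff.rfl

theorem isGroupCon_ker : IsGroupCon (Con.ker (fimToFree X)) := by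
  intro x
  induction x using Con.induction_on with
  | H m =>
    refine ⟨⟨(m : (Con.ker (fimToFree X)).Quotient), (m⁻¹ : FIM X), ?_, ?_⟩, rfl⟩
    all_goals
      rw [← Con.coe_mul, ← Con.coe_one, Con.eq, Con.ker_rel, map_mul, fimToFree_inv, map_one]
      simp

/-- A group quotient sends every idempotent to `1`. -/
theorem con_proj_one {M : Type*} [InverseMonoid M] {c : Con M} (hc : IsGroupCon c) {p : M}
    (hp : IsProj p) : c p 1 := by
  rw [← Con.eq, Con.coe_one]
  have h : (p : c.Quotient) * p = p := by rw [← Con.coe_mul, hp.mul_self]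
  exact (hc p).mul_left_cancel (by rw [h, mul_one])

theorem sigma_nf {M : Type*} [InverseMonoid M] (ι : X → M) (w : Word X) :
    sigmaCon M (evalWord ι w) (nf ι (evalWord FreeGroup.of w)) := by
  rw [sigmaCon_iff]
  intro c hc
  rw [evalWord_eq ι w]
  simpa using c.mul (con_proj_one hc (isProj_prod (isProj_idem ι) _)) (c.refl _)

/-- The maximum group image of `FIM(X)` is the free group. -/
theorem sigma_fim_iff (u v : Word X) :
    sigmaCon (FIM X) (evalWord fimGen u) (evalWord fimGen v) ↔
      evalWord (FreeGroup.of : X → FreeGroup X) u = evalWord FreeGroup.of v := by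
  constructor
  · intro h
    have := sigmaCon_iff.1 h _ isGroupCon_ker
    rwa [Con.ker_rel, evalWord_genMap, evalWord_genMap, fimToFree_mkW, fimToFree_mkW] at this
  · intro h
    refine (sigmaCon (FIM X)).trans (sigma_nf fimGen u) ?_
    rw [h]
    exact (sigmaCon (FIM X)).symm (sigma_nf fimGen v)

theorem xGen_fim : XGen (fimGen : X → FIM X) := by
  intro m
  refine Quotient.inductionOn' m fun w => ⟨w, evalWord_genMap _ w⟩

theorem simple_fim_iff (w : Word X) :
    IsSimplePathWordS (fimGen : X → FIM X) w ↔
      IsSimplePathWordG (FreeGroup.of : X → FreeGroup X) w := by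
  simp only [IsSimplePathWordS, IsSimplePathWordG, sigma_fim_iff]

theorem stronglyFInverse_fim : StronglyFInverse (fimGen : X → FIM X) := by
  refine ⟨xGen_fim, ?_, ?_⟩
  · intro a
    obtain ⟨w, rfl⟩ := xGen_fim a
    refine ⟨nf fimGen (evalWord FreeGroup.of w), (sigmaCon (FIM X)).symm (sigma_nf _ w), ?_⟩
    intro b hb
    obtain ⟨t, rfl⟩ := xGen_fim b
    rw [← (sigma_fim_iff t w).1 hb]
    exact natLe_nf _ t
  · intro u v hu hv huv
    rw [simple_fim_iff] at hu hv
    rw [sigma_fim_iff] at huv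
    refine ⟨by rw [eq_of_simple hu hv huv], fun t ht => ?_⟩
    rw [evalWord_eq_nf_of_simple _ hu, ← (sigma_fim_iff t u).1 ht]
    exact natLe_nf _ t

theorem presCon_of_msfRel {u v : Word X}
    (h : msfRel (FreeGroup.of : X → FreeGroup X) u v) :
    presCon (fun _ _ : Word X => False) u v := by
  rcases h with h | ⟨hu, hv, h⟩
  · rw [← mkW_eq_iff, ← evalWord_genMap, ← evalWord_genMap]
    exact evalWord_eq_of_mmRel _ h
  · rw [eq_of_simple hu hv h]
    exact Con.refl _ _

theorem presCon_msfRel_eq :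
    presCon (msfRel (FreeGroup.of : X → FreeGroup X)) = presCon (fun _ _ : Word X => False) := by
  apply le_antisymm
  · apply Con.conGen_le.2
    rintro u v ((h | h) | (h | h))
    · exact ConGen.Rel.of _ _ (Or.inl (Or.inl h))
    · exact presCon_of_msfRel h
    · exact ConGen.Rel.of _ _ (Or.inr (Or.inl h))
    · simpa only [wordInv_wordInv] using presCon_inv (presCon_of_msfRel h)
  · apply Con.conGen_mono
    rintro u v ((h | h) | (h | h))
    · exact Or.inl (Or.inl h)
    · exact h.elim
    · exact Or.inr (Or.inl h)
    · exact h.elim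

end FIM

/-- For the free group `FG(X)` with its standard free generating
set, `M_sF(FG(X),X) = M(FG(X),X)`; that is, the free inverse monoid `FIM(X)`
(the quotient of X̄* by the Wagner congruence alone, i.e. `InvPres` of the empty set
of extra relations; recall `M(FG(X),X) ≅ FIM(X)` by Munn-Scheiblich) is strongly
F-inverse, and it is the universal `X`-generated strongly F-inverse monoid with
maximum group image `FG(X)`. -/
theorem statement_5 {X : Type u} :
    presCon (msfRel (FreeGroup.of : X → FreeGroup X)) =
      presCon (fun _ _ : Word X => False) ∧
    StronglyFInverse (genMap (fun _ _ : Word X => False)) ∧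
    (∀ (S : Type v) (_ : InverseMonoid S) (ι : X → S), StronglyFInverse ι →
      ∃ φ : InvPres (fun _ _ : Word X => False) →* S,
        (∀ x : X, φ (genMap (fun _ _ : Word X => False) x) = ι x) ∧
        (∀ m : InvPres (fun _ _ : Word X => False), φ m⁻¹ = (φ m)⁻¹)) :=
  ⟨presCon_msfRel_eq, stronglyFInverse_fim, fun _ _ ι _ =>
    ⟨fimLift ι, fun x => by simp [genMap, fimLift_mkW, evalWord, evalLetter], fimLift_inv ι⟩⟩

end SFI
end

section
/- If the word w = a₁a₂⋯aₙ over X̄ is linked with respect to an X-generated inverse monoid M and z = a_j⋯a_k is a subword of w (1 ≤ j ≤ k ≤ n), then zz⁻¹ = a_j a_j⁻¹ and z⁻¹z = a_k⁻¹ a_k hold in M. -/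
/-!
In an inverse monoid, if `s⁻¹ s = t t⁻¹` then the product `s t` has the same range
idempotent `s s⁻¹` as `s` and the same domain idempotent `t⁻¹ t` as `t`
(`mul_of_matching`): the composable pairs form the groupoid underlying the monoid.
A factor of a linked word is therefore a composable path in this groupoid, and its value
starts where its first letter starts and ends where its last letter ends, by induction on
the length (`prod_of_chain`).
-/

/-! Common framework: words over a doubled alphabet, inverse monoids,
presentations of inverse monoids as quotients of the free monoid on letters,
the minimum group congruence, F-inverse and strongly F-inverse properties,
and the Margolis-Meakin / M_sF machinery. -/

namespace SFI

variable {X : Type*}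

/-- A matching product `s t` has the range idempotent of `s` and the domain idempotent of `t`. -/
theorem mul_of_matching {M : Type*} [InverseMonoid M] {s t : M} (h : s⁻¹ * s = t * t⁻¹) :
    s * t * (s * t)⁻¹ = s * s⁻¹ ∧ (s * t)⁻¹ * (s * t) = t⁻¹ * t := by
  rw [InverseMonoid.mul_inv_rev]
  constructor
  · calc s * t * (t⁻¹ * s⁻¹) = s * (t * t⁻¹) * s⁻¹ := by simp only [mul_assoc]
      _ = s * s⁻¹ * s * s⁻¹ := by rw [← h]; simp only [mul_assoc]
      _ = s * s⁻¹ := by rw [InverseMonoid.mul_inv_mul]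
  · calc t⁻¹ * s⁻¹ * (s * t) = t⁻¹ * (s⁻¹ * s) * t := by simp only [mul_assoc]
      _ = t⁻¹ * (t * t⁻¹ * t) := by rw [h]; simp only [mul_assoc]
      _ = t⁻¹ * t := by rw [InverseMonoid.mul_inv_mul]

/-- The product of a non-empty list of consecutively matching elements has the range
idempotent of the first element and the domain idempotent of the last one. -/
theorem prod_of_chain {M : Type*} [InverseMonoid M] (l : List M) (x : M)
    (h : (x :: l).IsChain (fun s t => s⁻¹ * s = t * t⁻¹)) :
    (x :: l).prod * (x :: l).prod⁻¹ = x * x⁻¹ ∧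
    (x :: l).prod⁻¹ * (x :: l).prod =
      ((x :: l).getLast (List.cons_ne_nil x l))⁻¹ * (x :: l).getLast (List.cons_ne_nil x l) := by
  induction l generalizing x with
  | nil => simp
  | cons y l ih =>
    obtain ⟨hxy, hl⟩ := List.isChain_cons_cons.mp h
    obtain ⟨h₁, h₂⟩ := ih y hl
    obtain ⟨h₃, h₄⟩ := mul_of_matching (hxy.trans h₁.symm)
    rw [List.prod_cons, List.getLast_cons (List.cons_ne_nil y l)]
    exact ⟨h₃, h₄.trans h₂⟩

theorem Linked.isChain {X M : Type*} [Monoid M] [Inv M] {ι : X → M} {w : Word X}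
    (hl : Linked ι w) :
    ((FreeMonoid.toList w).map (evalLetter ι)).IsChain (fun s t => s⁻¹ * s = t * t⁻¹) := by
  rw [List.isChain_map, List.isChain_iff_forall_rel_of_append_cons_cons]
  intro a b p q h
  exact hl (FreeMonoid.ofList p) (FreeMonoid.ofList q) a b h

/-- If the word `w = a₁a₂⋯aₙ` is linked with respect to an
`X`-generated inverse monoid `M` and `z = a_j⋯a_k` is a (non-empty) subword of `w`
with first letter `a` and last letter `b`, then `z z⁻¹ = a a⁻¹` and `z⁻¹ z = b⁻¹ b`
hold in `M`. -/
theorem statement_10 {X M : Type*} [InverseMonoid M] (ι : X → M) (hMgen : XGen ι)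
    (w : Word X) (hl : Linked ι w) (p z q : Word X) (hw : w = p * z * q)
    (a b : Letter X) (ha : ∃ z' : Word X, z = FreeMonoid.of a * z')
    (hb : ∃ z'' : Word X, z = z'' * FreeMonoid.of b) :
    evalWord ι z * (evalWord ι z)⁻¹ = evalLetter ι a * (evalLetter ι a)⁻¹ ∧
    (evalWord ι z)⁻¹ * evalWord ι z = (evalLetter ι b)⁻¹ * evalLetter ι b := by
  subst hw
  have hc : ((FreeMonoid.toList z).map (evalLetter ι)).IsChain
      (fun s t => s⁻¹ * s = t * t⁻¹) :=
    hl.isChain.infix (List.IsInfix.map _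
      ⟨FreeMonoid.toList p, FreeMonoid.toList q, by simp only [FreeMonoid.toList_mul]⟩)
  obtain ⟨u, hu⟩ := ha
  obtain ⟨v, hv⟩ := hb
  have hza : (FreeMonoid.toList z).map (evalLetter ι) =
      evalLetter ι a :: (FreeMonoid.toList u).map (evalLetter ι) := by
    rw [hu]; simp
  have hzb : (FreeMonoid.toList z).map (evalLetter ι) =
      (FreeMonoid.toList v).map (evalLetter ι) ++ [evalLetter ι b] := by
    rw [hv]; simp
  rw [hza] at hc
  have key := prod_of_chain _ _ hc
  -- The same list, read from its other end, has last element `evalLetter ι b`.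
  have hlast : (evalLetter ι a :: (FreeMonoid.toList u).map (evalLetter ι)).getLast
      (List.cons_ne_nil _ _) = evalLetter ι b := by
    simp only [← hza, hzb, List.getLast_append_singleton]
  rwa [hlast, ← hza] at key

end SFI
end

section
/- Let |X| = 1 and let w ∈ X̄* be a non-empty cyclically reduced word. If M = Inv⟨X | w = 1⟩ is strongly F-inverse then M is a cyclic group. -/
/-!
Over a one-letter alphabet a reduced word is a power of a single letter `a`, since two adjacent
letters must be equal (`toList_eq_replicate`). Hence the image `g` of `a` in `Inv⟨X ∣ w = 1⟩`
satisfies `g ^ n = 1`, where `n ≥ 1` is the length of `w`. So `g` is a unit, and `g g⁻¹ g = g` forces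
its inverse in the inverse monoid, the image of `a⁻¹`, to be the group inverse `g ^ (n - 1)`. As `a`
and `a⁻¹` are the only letters, every element is a power of `g`.
-/

/-! Common framework: words over a doubled alphabet, inverse monoids,
presentations of inverse monoids as quotients of the free monoid on letters,
the minimum group congruence, F-inverse and strongly F-inverse properties,
and the Margolis-Meakin / M_sF machinery. -/

namespace SFI

variable {X : Type*}

theorem eq_or_eq_invL {X : Type*} [Unique X] (a b : Letter X) : b = a ∨ b = invL a := by
  obtain ⟨x, p⟩ := a
  obtain ⟨y, q⟩ := b
  obtain rfl : x = y := Subsingleton.elim _ _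
  cases p <;> cases q <;> simp [invL]

/-- A reduced word over a one-letter alphabet is a power of its first letter. -/
theorem toList_eq_replicate {X : Type*} [Unique X] (a : Letter X) (l : List (Letter X))
    (h : ∀ b : Letter X, ¬ ([b, invL b] <:+: a :: l)) :
    a :: l = List.replicate (l.length + 1) a := by
  induction l generalizing a with
  | nil => rfl
  | cons b l ih =>
    rcases eq_or_eq_invL a b with rfl | rfl
    · have := ih b fun c hc => h c (hc.trans (List.suffix_cons _ _).isInfix)
      rw [List.length_cons, List.replicate_succ, ← this]
    · exact absurd ⟨[], l, rfl⟩ (h a)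

theorem mkW_mul {X : Type*} (r : Word X → Word X → Prop) (u v : Word X) :
    mkW r (u * v) = mkW r u * mkW r v := rfl

theorem mkW_replicate {X : Type*} (r : Word X → Word X → Prop) (a : Letter X) (n : ℕ) :
    mkW r (FreeMonoid.ofList (List.replicate n a)) = mkW r (FreeMonoid.of a) ^ n := by
  induction n with
  | zero => rfl
  | succ n ih =>
    rw [pow_succ', ← ih]
    rfl

/-- Let `|X| = 1` and let `w` be a non-empty cyclically reduced
word over X̄.  If `M = Inv⟨X ∣ w = 1⟩` is strongly F-inverse, then `M` is a cyclic
group: every element of `M` is invertible, and `M` is generated by a single element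
together with its inverse. -/
theorem statement_11 {X : Type*} [Unique X] (w : Word X) (hne : w ≠ 1)
    (hcr : CyclicallyReducedWord w)
    (hSF : StronglyFInverse (genMap (specialRel w))) :
    (∀ m : InvPres (specialRel w), IsUnit m) ∧
    ∃ g : InvPres (specialRel w), ∀ m : InvPres (specialRel w),
      ∃ k : ℕ, m = g ^ k ∨ m = g⁻¹ ^ k := by
  obtain ⟨a, n, hw⟩ : ∃ (a : Letter X) (n : ℕ),
      w = FreeMonoid.ofList (List.replicate (n + 1) a) := by
    have hred := hcr.1
    rcases hl : FreeMonoid.toList w with _ | ⟨a, l⟩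
    · exact absurd (FreeMonoid.toList.injective hl) hne
    · refine ⟨a, l.length, ?_⟩
      rw [← toList_eq_replicate a l (fun b => hl ▸ hred b), ← hl, FreeMonoid.ofList_toList]
  set r := specialRel w with hr
  have hone : mkW r w = 1 :=
    Quotient.sound' (ConGen.Rel.of _ _ (Or.inl (Or.inr ⟨rfl, rfl⟩)))
  set g : InvPres r := mkW r (FreeMonoid.of a) with hg
  have hpow : g ^ (n + 1) = 1 := by
    rw [hg, ← mkW_replicate, ← hw, hone]
  have hu : IsUnit g := IsUnit.of_pow_eq_one hpow n.succ_ne_zero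
  have hgg : g * g⁻¹ = 1 := by
    apply hu.mul_right_cancel
    rw [one_mul, InverseMonoid.mul_inv_mul]
  have hinv : g⁻¹ = g ^ n := by
    apply hu.mul_left_cancel
    rw [hgg, ← pow_succ', hpow]
  have hgen : ∀ u : Word X, ∃ k : ℕ, mkW r u = g ^ k := by
    intro u
    induction u using FreeMonoid.recOn with
    | one => exact ⟨0, rfl⟩
    | of_mul b u ih =>
      obtain ⟨k, hk⟩ := ih
      rw [mkW_mul, hk]
      rcases eq_or_eq_invL a b with rfl | rfl
      · exact ⟨k + 1, (pow_succ' _ _).symm⟩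
      · refine ⟨n + k, ?_⟩
        have : mkW r (FreeMonoid.of (invL a)) = g⁻¹ := rfl
        rw [this, hinv, pow_add]
  have hall : ∀ m : InvPres r, ∃ k : ℕ, m = g ^ k := fun m =>
    Quotient.inductionOn' m hgen
  refine ⟨fun m => ?_, g, fun m => ?_⟩
  · obtain ⟨k, rfl⟩ := hall m
    exact hu.pow k
  · obtain ⟨k, hk⟩ := hall m
    exact ⟨k, Or.inl hk⟩

end SFI
end
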